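/- For every ε > 0, the set F_o is open in GL_n(ℝ), and the closure F̄ of F is contained in F_o. -/

import Mathlib

noncomputable section

/-- `M_n(ℝ)`, the `n × n` real matrices, identified with `ℝ^{n²}`. -/
abbrev Mn (n : ℕ) : Type := Matrix (Fin n) (Fin n) ℝ

/-- The tile `F ⊆ GL_n(ℝ)`: matrices `s • (k * w * y)` with `s ∈ [1,2)`,
`k` orthogonal, `w = diag(w₁, …, w_{n-1}, (w₁⋯w_{n-1})⁻¹)` with each `w_i ∈ [1,2)`,
and `y` unit upper triangular with strict upper entries in `[0,1)`. -/
def Fset (n : ℕ) : Set (Mn n) :=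
  {a | ∃ (s : ℝ) (k : Mn n) (wd : Fin n → ℝ) (y : Mn n),
    s ∈ Set.Ico (1 : ℝ) 2 ∧
    k.transpose * k = 1 ∧
    (∀ i : Fin n, (i : ℕ) < n - 1 → wd i ∈ Set.Ico (1 : ℝ) 2) ∧
    (∀ i : Fin n, (i : ℕ) = n - 1 →
      wd i = (∏ j ∈ Finset.filter (fun j : Fin n => (j : ℕ) < n - 1) Finset.univ, wd j)⁻¹) ∧
    (∀ i, y i i = 1) ∧ (∀ i j : Fin n, j < i → y i j = 0) ∧
    (∀ i j : Fin n, i < j → y i j ∈ Set.Ico (0 : ℝ) 1) ∧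
    a = s • (k * Matrix.diagonal wd * y)}

/-- The discrete set `P ⊆ GL_n(ℝ)`: matrices `2^λ • u` with `u` upper triangular,
`u_{ii} = 2^{κ_i}`, `u_{ij} = 2^{κ_j} μ_{ij}` for `i < j`, where `λ, κ_i, μ_{ij} ∈ ℤ`
and `κ₁ + ⋯ + κ_n = 0` (i.e. `κ_n = -(κ₁ + ⋯ + κ_{n-1})`). -/
def Pset (n : ℕ) : Set (Mn n) :=
  {p | ∃ (lam : ℤ) (κ : Fin n → ℤ) (μ : Fin n → Fin n → ℤ),
    (∑ i, κ i) = 0 ∧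
    p = (2 : ℝ) ^ lam • Matrix.of (fun i j : Fin n =>
      if i = j then (2 : ℝ) ^ (κ i)
      else if i < j then (2 : ℝ) ^ (κ j) * (μ i j : ℝ)
      else 0)}

/-- The enlarged tile `F_o`: as `F`, but with `s, w_i ∈ (1-ε, 2+ε)` and strict upper
entries of `y` in `(-ε, 1+ε)`. -/
def FoSet (n : ℕ) (ε : ℝ) : Set (Mn n) :=
  {a | ∃ (s : ℝ) (k : Mn n) (wd : Fin n → ℝ) (y : Mn n),
    s ∈ Set.Ioo (1 - ε) (2 + ε) ∧
    k.transpose * k = 1 ∧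
    (∀ i : Fin n, (i : ℕ) < n - 1 → wd i ∈ Set.Ioo (1 - ε) (2 + ε)) ∧
    (∀ i : Fin n, (i : ℕ) = n - 1 →
      wd i = (∏ j ∈ Finset.filter (fun j : Fin n => (j : ℕ) < n - 1) Finset.univ, wd j)⁻¹) ∧
    (∀ i, y i i = 1) ∧ (∀ i j : Fin n, j < i → y i j = 0) ∧
    (∀ i j : Fin n, i < j → y i j ∈ Set.Ioo (-ε) (1 + ε)) ∧
    a = s • (k * Matrix.diagonal wd * y)}

open Filter Topology Matrix in
theorem closed_part (n : ℕ) (ε : ℝ) (hε : 0 < ε) : closure (Fset n) ⊆ FoSet n ε := by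
  let W : (Fin n → ℝ) → Fin n → ℝ := fun wd i => if (i : ℕ) < n - 1 then wd i else
    (∏ j ∈ Finset.filter (fun j : Fin n => (j : ℕ) < n - 1) Finset.univ, wd j)⁻¹
  let Kk : Set (Mn n) := {k | k.transpose * k = 1}
  let Kw : Set (Fin n → ℝ) := Set.pi Set.univ fun _ => Set.Icc 1 2
  let Ky : Set (Mn n) := Set.pi Set.univ fun i => Set.pi Set.univ fun j =>
    if i = j then {1} else if i < j then Set.Icc 0 1 else {0}
  have hKk : IsCompact Kk := by
    have hbox : IsCompact (Set.pi Set.univ fun _ => Set.pi Set.univ fun _ => Set.Icc (-1) 1 :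
        Set (Fin n → Fin n → ℝ)) :=
      isCompact_univ_pi fun _ => isCompact_univ_pi fun _ => isCompact_Icc
    refine IsCompact.of_isClosed_subset (X := Mn n) hbox ?_ ?_
    · exact isClosed_eq (by fun_prop) continuous_const
    · intro k hk i _ j _
      have h1 : (k.transpose * k) j j = 1 := by rw [show k.transpose * k = 1 from hk]; simp
      rw [Matrix.mul_apply] at h1
      have h2 : k i j * k i j ≤ 1 := by
        rw [← h1]
        exact Finset.single_le_sum (f := fun x => kᵀ j x * k x j)
          (fun x _ => mul_self_nonneg (k x j)) (Finset.mem_univ i)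
      exact ⟨by nlinarith, by nlinarith⟩
  have hKw : IsCompact Kw := isCompact_univ_pi fun _ => isCompact_Icc
  have hKy : IsCompact Ky := by
    refine isCompact_univ_pi fun i => isCompact_univ_pi fun j => ?_
    split_ifs
    · exact isCompact_singleton
    · exact isCompact_Icc
    · exact isCompact_singleton
  let Φ : ℝ × Mn n × (Fin n → ℝ) × Mn n → Mn n :=
    fun p => p.1 • (p.2.1 * Matrix.diagonal (W p.2.2.1) * p.2.2.2)
  have hK : IsCompact ((Set.Icc (1:ℝ) 2) ×ˢ Kk ×ˢ Kw ×ˢ Ky) :=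
    isCompact_Icc.prod (hKk.prod (hKw.prod hKy))
  have hW : ContinuousOn W Kw := by
    rw [continuousOn_pi]
    intro i
    by_cases hi : (i : ℕ) < n - 1
    · simp only [W, hi, if_true]; fun_prop
    · simp only [W, hi, if_false]
      refine ContinuousOn.inv₀ (by fun_prop) ?_
      intro w hw
      refine Finset.prod_ne_zero_iff.2 fun j _ => ?_
      have : (1:ℝ) ≤ w j := (hw j trivial).1
      linarith
  have hΦ : ContinuousOn Φ ((Set.Icc (1:ℝ) 2) ×ˢ Kk ×ˢ Kw ×ˢ Ky) := by
    have hW' : ContinuousOn (fun p : ℝ × Mn n × (Fin n → ℝ) × Mn n => W p.2.2.1)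
        ((Set.Icc (1:ℝ) 2) ×ˢ Kk ×ˢ Kw ×ˢ Ky) :=
      hW.comp (by fun_prop) (fun p hp => hp.2.2.1)
    have hd : ContinuousOn (fun p : ℝ × Mn n × (Fin n → ℝ) × Mn n => Matrix.diagonal (W p.2.2.1))
        ((Set.Icc (1:ℝ) 2) ×ˢ Kk ×ˢ Kw ×ˢ Ky) :=
      (Continuous.matrix_diagonal continuous_id).comp_continuousOn hW'
    rw [continuousOn_iff_continuous_domRestrict] at hd ⊢
    have h1 : Continuous fun p : ↥((Set.Icc (1:ℝ) 2) ×ˢ Kk ×ˢ Kw ×ˢ Ky) => p.1.1 := by fun_prop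
    have h2 : Continuous fun p : ↥((Set.Icc (1:ℝ) 2) ×ˢ Kk ×ˢ Kw ×ˢ Ky) => p.1.2.1 := by fun_prop
    have h3 : Continuous fun p : ↥((Set.Icc (1:ℝ) 2) ×ˢ Kk ×ˢ Kw ×ˢ Ky) => p.1.2.2.2 := by fun_prop
    exact h1.smul ((h2.matrix_mul hd).matrix_mul h3)
  have hcl : IsClosed (Φ '' ((Set.Icc (1:ℝ) 2) ×ˢ Kk ×ˢ Kw ×ˢ Ky)) :=
    (hK.image_of_continuousOn hΦ).isClosed
  refine (closure_minimal ?_ hcl).trans ?_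
  · rintro a ⟨s, k, wd, y, hs, hk, hw, hl, hy1, hy0, hy, rfl⟩
    refine ⟨(s, k, (fun i => if (i : ℕ) < n - 1 then wd i else 1), y),
      ⟨⟨hs.1, hs.2.le⟩, hk, ?_, ?_⟩, ?_⟩
    · intro i _
      by_cases hi : (i : ℕ) < n - 1
      · simpa [hi] using ⟨(hw i hi).1, (hw i hi).2.le⟩
      · simp [hi]
    · intro i _ j _
      dsimp only
      split_ifs with h1 h2
      · subst h1; exact hy1 i
      · exact ⟨(hy i j h2).1, (hy i j h2).2.le⟩
      · exact hy0 i j (lt_of_le_of_ne (not_lt.1 h2) (Ne.symm h1))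
    · have : W (fun i => if (i : ℕ) < n - 1 then wd i else 1) = wd := by
        funext i
        by_cases hi : (i : ℕ) < n - 1
        · simp [W, hi]
        · simp only [W, hi, if_false]
          rw [hl i (by omega)]
          congr 1
          refine Finset.prod_congr rfl fun j hj => ?_
          simp [(Finset.mem_filter.1 hj).2]
      simp only [Φ, this]
  · rintro a ⟨⟨s, k, wd, y⟩, ⟨hs, hk, hw, hy⟩, rfl⟩
    refine ⟨s, k, W wd, y, ⟨by linarith [hs.1], by linarith [hs.2]⟩, hk, ?_, ?_, ?_, ?_, ?_, rfl⟩
    · intro i hi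
      have := hw i trivial
      simp only [W, hi, if_true]
      exact ⟨by linarith [this.1], by linarith [this.2]⟩
    · intro i hi
      simp only [W, hi, lt_irrefl, if_false]
      congr 1
      refine Finset.prod_congr rfl fun j hj => ?_
      simp [(Finset.mem_filter.1 hj).2]
    · intro i
      have := hy i trivial i trivial
      simpa using this
    · intro i j hij
      have := hy i trivial j trivial
      simpa [hij.ne', hij.not_gt] using this
    · intro i j hij
      have := hy i trivial j trivial
      simp only [hij.ne, hij, if_true, if_false] at this
      exact ⟨by linarith [this.1], by linarith [this.2]⟩

/-- Columns of a matrix as Euclidean vectors. -/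
def colv {n : ℕ} (a : Mn n) (j : Fin n) : EuclideanSpace ℝ (Fin n) :=
  WithLp.toLp 2 (fun i => a i j)

/-- Gram-Schmidt vectors of the columns. -/
def gsv {n : ℕ} (a : Mn n) (j : Fin n) : EuclideanSpace ℝ (Fin n) :=
  InnerProductSpace.gramSchmidt ℝ (colv a) j

/-- The unipotent factor. -/
def Yf {n : ℕ} (a : Mn n) : Mn n := Matrix.of fun i j =>
  if i = j then 1 else if i < j then inner ℝ (gsv a i) (colv a j) / ‖gsv a i‖ ^ 2 else 0

theorem gsv_eq {n : ℕ} (a : Mn n) (j : Fin n) : gsv a j = colv a j - ∑ i ∈ Finset.Iio j,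
    (inner ℝ (gsv a i) (colv a j) / ‖gsv a i‖ ^ 2) • gsv a i := by
  have := InnerProductSpace.gramSchmidt_def'' ℝ (colv a) j
  rw [eq_sub_iff_add_eq]
  exact this.symm

theorem gsv_ne {n : ℕ} (a : Mn n) (ha : a.det ≠ 0) (j : Fin n) : gsv a j ≠ 0 := by
  apply InnerProductSpace.gramSchmidt_ne_zero
  have h := Matrix.linearIndependent_cols_of_det_ne_zero ha
  have h2 := h.map' (WithLp.linearEquiv 2 ℝ (Fin n → ℝ)).symm.toLinearMap (LinearEquiv.ker _)
  exact h2

theorem colv_cont {n : ℕ} (j : Fin n) : Continuous fun a : Mn n => colv a j := by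
  unfold colv
  refine (PiLp.continuous_toLp 2 _).comp ?_
  exact continuous_pi fun i => by fun_prop

theorem gsv_cont {n : ℕ} (a : Mn n) (ha : a.det ≠ 0) (j : Fin n) :
    ContinuousAt (fun a => gsv a j) a := by
  induction j using WellFoundedLT.induction with
  | _ j ih =>
    have : (fun a : Mn n => gsv a j) = fun a => colv a j - ∑ i ∈ Finset.Iio j,
      (inner ℝ (gsv a i) (colv a j) / ‖gsv a i‖ ^ 2) • gsv a i := funext fun a => gsv_eq a j
    rw [this]
    refine (colv_cont j).continuousAt.sub ?_
    refine tendsto_finsetSum _ fun i hi => ?_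
    have h := ih i (Finset.mem_Iio.1 hi)
    have hne := gsv_ne a ha i
    exact ((h.inner (𝕜 := ℝ) (colv_cont j).continuousAt).div (h.norm.pow 2) (by simpa using hne)).smul h

theorem Yf_cont {n : ℕ} (a : Mn n) (ha : a.det ≠ 0) (i j : Fin n) :
    ContinuousAt (fun a => Yf a i j) a := by
  have h := gsv_cont a ha i
  have hne := gsv_ne a ha i
  simp only [Yf, Matrix.of_apply]
  split_ifs
  · exact continuousAt_const
  · exact (h.inner (𝕜 := ℝ) (colv_cont j).continuousAt).div (h.norm.pow 2) (by simpa using hne)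
  · exact continuousAt_const

theorem sum_tri {n : ℕ} (c : Fin n → Fin n → ℝ) (y : Mn n) (h1 : ∀ i, y i i = 1)
    (h0 : ∀ i j : Fin n, j < i → y i j = 0) (p j : Fin n) :
    ∑ i, c i p * y i j = c j p + ∑ i ∈ Finset.Iio j, c i p * y i j := by
  have : ∑ i ∈ Finset.Iic j, c i p * y i j = ∑ i, c i p * y i j := by
    refine Finset.sum_subset (Finset.subset_univ _) fun i _ hi => ?_
    rw [h0 i j (by simpa using hi), mul_zero]
  rw [← this, ← Finset.Iio_insert, Finset.sum_insert (by simp), h1, mul_one]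

theorem entry_fac {n : ℕ} (s : ℝ) (k : Mn n) (wd : Fin n → ℝ) (y : Mn n) (p j : Fin n) :
    (s • (k * Matrix.diagonal wd * y)) p j = ∑ i, s * (k p i * wd i * y i j) := by
  rw [Matrix.smul_apply, Matrix.mul_apply, smul_eq_mul, Finset.mul_sum]
  simp only [Matrix.mul_diagonal]

theorem exist_fac {n : ℕ} (a : Mn n) (ha : a.det ≠ 0) (s : ℝ) (wd : Fin n → ℝ)
    (h : ∀ i, (s * wd i) ^ 2 = ‖gsv a i‖ ^ 2) :
    ∃ k : Mn n, k.transpose * k = 1 ∧ a = s • (k * Matrix.diagonal wd * Yf a) := by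
  have hne : ∀ i, s * wd i ≠ 0 := fun i h0 => by
    have := h i
    rw [h0] at this
    exact gsv_ne a ha i (by simpa using this.symm)
  refine ⟨Matrix.of fun p i => gsv a i p / (s * wd i), ?_, ?_⟩
  · ext i j
    simp only [Matrix.mul_apply, Matrix.transpose_apply, Matrix.of_apply]
    have e : ∑ x, gsv a i x / (s * wd i) * (gsv a j x / (s * wd j)) =
        inner ℝ (gsv a i) (gsv a j) / ((s * wd i) * (s * wd j)) := by
      simp only [PiLp.inner_apply, Finset.sum_div]
      refine Finset.sum_congr rfl fun x _ => ?_
      rw [div_mul_div_comm]; simp [mul_comm]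
    rw [e]
    by_cases hij : i = j
    · subst hij
      rw [real_inner_self_eq_norm_sq, ← h i, Matrix.one_apply_eq, pow_two]
      exact div_self (mul_ne_zero (hne i) (hne i))
    · rw [Matrix.one_apply_ne hij]
      have : inner ℝ (gsv a i) (gsv a j) = (0 : ℝ) :=
        InnerProductSpace.gramSchmidt_orthogonal ℝ (colv a) hij
      rw [this, zero_div]
  · ext p j
    rw [entry_fac]
    simp only [Matrix.of_apply]
    have e : ∀ i, s * (gsv a i p / (s * wd i) * wd i * Yf a i j) = gsv a i p * Yf a i j := by
      intro i
      have h1 := left_ne_zero_of_mul (hne i)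
      have h2 := right_ne_zero_of_mul (hne i)
      field_simp
    simp only [e]
    rw [sum_tri (fun i p => gsv a i p) (Yf a) (by simp [Yf])
      (fun i j hij => by simp [Yf, hij.ne', hij.not_gt])]
    have h3 := congrArg (fun v : EuclideanSpace ℝ (Fin n) => v p) (gsv_eq a j)
    simp only [PiLp.sub_apply, WithLp.ofLp_sum, Finset.sum_apply, PiLp.smul_apply, smul_eq_mul] at h3
    rw [h3]
    have : ∑ i ∈ Finset.Iio j, gsv a i p * Yf a i j = ∑ i ∈ Finset.Iio j,
        (inner ℝ (gsv a i) (colv a j) / ‖gsv a i‖ ^ 2) * gsv a i p := by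
      refine Finset.sum_congr rfl fun i hi => ?_
      have hi := Finset.mem_Iio.1 hi
      simp [Yf, hi.ne, hi, mul_comm]
    rw [this]
    simp [colv]

theorem unique_fac {n : ℕ} (s : ℝ) (k : Mn n) (wd : Fin n → ℝ) (y : Mn n)
    (hk : k.transpose * k = 1) (h1 : ∀ i, y i i = 1) (h0 : ∀ i j : Fin n, j < i → y i j = 0)
    (a : Mn n) (ha : a.det ≠ 0) (hfac : a = s • (k * Matrix.diagonal wd * y)) :
    (∀ i, (s * wd i) ^ 2 = ‖gsv a i‖ ^ 2) ∧ Yf a = y := by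
  let c : Fin n → EuclideanSpace ℝ (Fin n) := fun i => (s * wd i) • colv k i
  have hko : ∀ i j, inner ℝ (colv k i) (colv k j) = if i = j then (1:ℝ) else 0 := by
    intro i j
    rw [← Matrix.one_apply, ← hk, Matrix.mul_apply]
    simp [PiLp.inner_apply, colv, mul_comm]
  have hcol : ∀ j, colv a j = c j + ∑ i ∈ Finset.Iio j, y i j • c i := by
    intro j
    ext p
    have := sum_tri (fun i p => c i p) y h1 h0 p j
    simp only [PiLp.add_apply, WithLp.ofLp_sum, Finset.sum_apply, PiLp.smul_apply, smul_eq_mul]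
    simp only [mul_comm (y _ _)]
    rw [← this, hfac]
    simp only [colv, entry_fac, smul_eq_mul, c, PiLp.smul_apply]
    refine Finset.sum_congr rfl fun i _ => ?_
    ring
  have hcc : ∀ i j, inner ℝ (c i) (c j) = if i = j then (s * wd i) ^ 2 else 0 := by
    intro i j
    simp only [c, inner_smul_left, inner_smul_right, hko]
    by_cases hij : i = j
    · subst hij; simp; ring
    · simp [hij]
  have hcn : ∀ i, ‖c i‖ ^ 2 = (s * wd i) ^ 2 := by
    intro i
    rw [← real_inner_self_eq_norm_sq, hcc]; simp
  have hin : ∀ i j, i < j → inner ℝ (c i) (colv a j) = y i j * (s * wd i) ^ 2 := by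
    intro i j hij
    rw [hcol, inner_add_right, inner_sum, hcc]
    simp only [inner_smul_right, hcc]
    simp [hij.ne, hij]
  have hg : ∀ j, gsv a j = c j := by
    intro j
    induction j using WellFoundedLT.induction with
    | _ j ih =>
      rw [gsv_eq, sub_eq_iff_eq_add, hcol j]
      congr 1
      refine Finset.sum_congr rfl fun i hi => ?_
      have hi := Finset.mem_Iio.1 hi
      have hne := gsv_ne a ha i
      rw [ih i hi] at hne ⊢
      rw [← hcol, hin i j hi, hcn, mul_div_cancel_right₀]
      rw [← hcn]; simpa using hne
  refine ⟨fun i => by rw [hg, hcn], ?_⟩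
  ext i j
  simp only [Yf, Matrix.of_apply]
  split_ifs with h2 h3
  · subst h2; exact (h1 i).symm
  · have hne := gsv_ne a ha i
    rw [hg] at hne ⊢
    rw [hin i j h3, hcn, mul_div_cancel_right₀]
    rw [← hcn]; simpa using hne
  · exact (h0 i j (lt_of_le_of_ne (not_lt.1 h3) (Ne.symm h2))).symm

theorem prod_split {n : ℕ} (hn : 1 ≤ n) (wd : Fin n → ℝ) :
    ∏ i, wd i = (∏ j ∈ Finset.filter (fun j : Fin n => (j : ℕ) < n - 1) Finset.univ, wd j) *
      wd ⟨n - 1, by omega⟩ := by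
  rw [← Finset.prod_filter_mul_prod_filter_not Finset.univ (fun j : Fin n => (j : ℕ) < n - 1)]
  congr 1
  have : Finset.filter (fun j : Fin n => ¬ (j : ℕ) < n - 1) Finset.univ = {⟨n - 1, by omega⟩} := by
    ext j
    simp only [Finset.mem_filter, Finset.mem_univ, true_and, Finset.mem_singleton, Fin.ext_iff]
    omega
  rw [this, Finset.prod_singleton]

open Filter Topology in
theorem open_part (n : ℕ) (hn : 1 ≤ n) (ε : ℝ) :
    IsOpen {a : {m : Mn n // m.det ≠ 0} | (a : Mn n) ∈ FoSet n ε} := by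
  rw [isOpen_iff_mem_nhds]
  rintro ⟨a0, ha0⟩ ⟨s, k, wd, y, hs, hk, hw, hl, hy1, hy0, hy, hfac⟩
  simp only at hfac
  obtain ⟨hN, hY⟩ := unique_fac s k wd y hk hy1 hy0 a0 ha0 hfac
  have hNpos : ∀ a : Mn n, a.det ≠ 0 → ∀ i, 0 < ‖gsv a i‖ := fun a ha i =>
    norm_pos_iff.2 (gsv_ne a ha i)
  let S : Mn n → ℝ := fun a => (∏ i, ‖gsv a i‖) ^ ((n : ℝ)⁻¹)
  have hSpos : ∀ a : Mn n, a.det ≠ 0 → 0 < S a := fun a ha =>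
    Real.rpow_pos_of_pos (Finset.prod_pos fun i _ => hNpos a ha i) _
  have hSn : ∀ a, S a ^ n = ∏ i, ‖gsv a i‖ := fun a =>
    Real.rpow_inv_natCast_pow (Finset.prod_nonneg fun i _ => norm_nonneg _) (by omega)
  have hSc : ContinuousAt S a0 := by
    refine ContinuousAt.rpow_const ?_ (Or.inr (by positivity))
    exact tendsto_finsetProd _ fun i _ => (gsv_cont a0 ha0 i).norm
  have hwne : ∀ i, wd i ≠ 0 := fun i h => by
    have h1 := hN i
    rw [h] at h1
    have := hNpos a0 ha0 i
    rw [mul_zero] at h1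
    nlinarith
  have hprod : ∏ i, wd i = 1 := by
    rw [prod_split hn, hl ⟨n - 1, by omega⟩ rfl]
    exact mul_inv_cancel₀ (Finset.prod_ne_zero_iff.2 fun i _ => hwne i)
  let s' : Mn n → ℝ := fun a => s * (S a / S a0)
  let w' : Mn n → Fin n → ℝ := fun a i => wd i * ((‖gsv a i‖ / ‖gsv a0 i‖) * (S a0 / S a))
  have hs0 : s' a0 = s := by simp [s', (hSpos a0 ha0).ne']
  have hw0 : ∀ i, w' a0 i = wd i := fun i => by
    simp [w', (hSpos a0 ha0).ne', gsv_ne a0 ha0 i]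
  have hsc : ContinuousAt s' a0 := continuousAt_const.mul (hSc.div_const _)
  have hwc : ∀ i, ContinuousAt (fun a => w' a i) a0 := fun i =>
    continuousAt_const.mul (((gsv_cont a0 ha0 i).norm.div_const _).mul
      (continuousAt_const.div hSc (hSpos a0 ha0).ne'))
  have e1 : ∀ᶠ a in 𝓝 a0, s' a ∈ Set.Ioo (1 - ε) (2 + ε) :=
    hsc.eventually_mem (isOpen_Ioo.mem_nhds (by rw [hs0]; exact hs))
  have e2 : ∀ᶠ a in 𝓝 a0, ∀ i : Fin n, (i : ℕ) < n - 1 → w' a i ∈ Set.Ioo (1 - ε) (2 + ε) := by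
    rw [eventually_all]
    intro i
    by_cases hi : (i : ℕ) < n - 1
    · have := (hwc i).eventually_mem (isOpen_Ioo.mem_nhds (by rw [hw0]; exact hw i hi))
      filter_upwards [this] with a h _ using h
    · exact Eventually.of_forall fun a h => absurd h hi
  have e3 : ∀ᶠ a in 𝓝 a0, ∀ i j : Fin n, i < j → Yf a i j ∈ Set.Ioo (-ε) (1 + ε) := by
    rw [eventually_all]
    intro i
    rw [eventually_all]
    intro j
    by_cases hi : i < j
    · have := (Yf_cont a0 ha0 i j).eventually_mem
        (isOpen_Ioo.mem_nhds (by rw [hY]; exact hy i j hi))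
      filter_upwards [this] with a h _ using h
    · exact Eventually.of_forall fun a h => absurd h hi
  have hv : Tendsto (Subtype.val : {m : Mn n // m.det ≠ 0} → Mn n) (𝓝 ⟨a0, ha0⟩) (𝓝 a0) :=
    continuous_subtype_val.continuousAt
  filter_upwards [hv.eventually e1, hv.eventually e2, hv.eventually e3]
  rintro ⟨a, ha⟩ h1 h2 h3
  simp only at h1 h2 h3
  have hSa := (hSpos a ha).ne'
  have hSa0 := (hSpos a0 ha0).ne'
  obtain ⟨k', hk', hfac'⟩ := exist_fac a ha (s' a) (w' a) (fun i => by
    have hg0 := (hNpos a0 ha0 i).ne'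
    have : s' a * w' a i = (s * wd i) * (‖gsv a i‖ / ‖gsv a0 i‖) := by
      simp only [s', w']
      field_simp
    rw [this, mul_pow, hN i, div_pow]
    field_simp)
  have hp' : ∏ i, w' a i = 1 := by
    simp only [w', Finset.prod_mul_distrib, Finset.prod_div_distrib, hprod, Finset.prod_const,
      Finset.card_univ, Fintype.card_fin, ← hSn]
    field_simp
  refine ⟨s' a, k', w' a, Yf a, h1, hk', h2, ?_, by simp [Yf],
    fun i j hij => by simp [Yf, hij.ne', hij.not_gt], h3, hfac'⟩
  intro i hi
  have : i = ⟨n - 1, by omega⟩ := Fin.ext hi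
  rw [prod_split hn] at hp'
  rw [this]
  exact eq_inv_of_mul_eq_one_right hp'

/-- For every `ε > 0`, the set `F_o` is open in `GL_n(ℝ)` (with the
subspace topology from `M_n(ℝ) ≅ ℝ^{n²}`), and the closure of `F` is contained in
`F_o`. -/
theorem stmt_14 (n : ℕ) (hn : 1 ≤ n) (ε : ℝ) (hε : 0 < ε) :
    IsOpen {a : {m : Mn n // m.det ≠ 0} | (a : Mn n) ∈ FoSet n ε} ∧
    closure (Fset n) ⊆ FoSet n ε := by
  exact ⟨open_part n hn ε, closed_part n ε hε⟩
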